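/- Let q be a real number with 0 < q and q ≠ 1, let h₁, h₂, l₁, α₁, λ be real numbers and t₁, t₂ nonzero reals. Assume λ + α₁ = -N for some positive integer N (so (q^{λ+α₁};q)_n = 0 for all n > N and the series below is a finite sum), and assume q^{h₁-l₁+n} ≠ 1 and q^{h₂-l₁+n}·t₂/t₁ ≠ 1 for all integers 1 ≤ n ≤ N. Then the function g(x) = x^{λ} · Σ_{n=0}^{N} q^n · (q^{λ+α₁};q)_n / ((q^{h₁-l₁+1};q)_n (q^{h₂-l₁+1}·t₂/t₁;q)_n (q;q)_n) · (x/(q^{l₁-1/2}t₁);q)_n satisfies the variant of the confluent q-hypergeometric equation of type (1,2) for all x > 0. -/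

import Mathlib

/-- The finite q-shifted factorial `(a;q)_n = ∏_{i=0}^{n-1} (1 - a q^i)`. -/
noncomputable def qPoch (q a : ℝ) (n : ℕ) : ℝ :=
  ∏ i ∈ Finset.range n, (1 - a * q ^ i)

/-- The variant of the confluent q-hypergeometric equation of type (1,2) (for `x > 0`). -/
def confEq12 (q h₁ h₂ l₁ α₁ lam t₁ t₂ : ℝ) (g : ℝ → ℝ) : Prop :=
  ∀ x : ℝ, 0 < x →
    q ^ (h₁ + h₂ - l₁ - 2 * lam + 1/2) * t₂ * (q ^ (l₁ - 1/2) * t₁ - x) * g (q * x)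
    + (x - q ^ (h₁ + 1/2) * t₁) * (x - q ^ (h₂ + 1/2) * t₂) * g (x / q)
    - (q ^ α₁ * x ^ 2
        - q ^ (h₁ + h₂ - lam + 1/2) * (q ^ (-h₂) * t₁ + q ^ (-h₁) * t₂ + q ^ (-l₁) * t₂) * x
        + q ^ (h₁ + h₂ - lam) * (q + 1) * t₁ * t₂) * g x = 0

theorem qPoch_succ (q a : ℝ) (n : ℕ) : qPoch q a (n+1) = qPoch q a n * (1 - a * q ^ n) := by
  simp [qPoch, Finset.prod_range_succ]

theorem qPoch_div (q y : ℝ) (hq : q ≠ 0) (n : ℕ) :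
    qPoch q (y / q) (n+1) = (1 - y / q) * qPoch q y n := by
  unfold qPoch
  rw [Finset.prod_range_succ', mul_comm]
  congr 1
  · simp
  · refine Finset.prod_congr rfl fun i _ => ?_
    rw [pow_succ]; field_simp

theorem qPoch_mul (q y : ℝ) (n : ℕ) :
    (1 - y) * qPoch q (q * y) n = qPoch q y n * (1 - y * q ^ n) := by
  rw [← qPoch_succ]
  unfold qPoch
  rw [Finset.prod_range_succ', mul_comm]
  congr 1
  · refine Finset.prod_congr rfl fun i _ => ?_
    rw [pow_succ]; ring
  · simp

theorem core_sum (q A B C y : ℝ) (hq : q ≠ 0) (c : ℕ → ℝ) (N : ℕ)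
    (hc : ∀ n < N, c (n+1) * ((1 - B * q ^ n) * (1 - C * q ^ n) * (1 - q * q ^ n))
      = q * (1 - A * q ^ n) * c n) (M : ℕ) (hM : M ≤ N) :
    ∑ n ∈ Finset.range (M+1), c n * (B * C / q * ((1 - y) * qPoch q (q * y) n)
      + (y - B) * (y - C) * qPoch q (y / q) n
      - (A * y ^ 2 - (B + C + B * C / q) * y + B * C * (1 + 1 / q)) * qPoch q y n)
    = (1 - A * q ^ M) / q ^ M * c M * y ^ 2 * qPoch q y M := by
  induction M with
  | zero =>
    simp [qPoch]
    field_simp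
    ring
  | succ M ih =>
    rw [Finset.sum_range_succ, ih (by omega), qPoch_div _ _ hq, qPoch_mul, qPoch_succ, pow_succ q M]
    have h := hc M (by omega)
    have hQ : q ^ M ≠ 0 := pow_ne_zero _ hq
    generalize q ^ M = Q at *
    generalize qPoch q y M = P at *
    generalize c (M+1) = c' at *
    generalize c M = c0 at *
    field_simp
    linear_combination (-y ^ 2 * P) * h

theorem stmt3 (q h₁ h₂ l₁ α₁ lam t₁ t₂ : ℝ) (N : ℕ)
    (hq : 0 < q) (hq1 : q ≠ 1) (ht₁ : t₁ ≠ 0) (ht₂ : t₂ ≠ 0)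
    (hN : 0 < N) (hNlam : lam + α₁ = -(N : ℝ))
    (hden : ∀ n : ℕ, 1 ≤ n → n ≤ N →
      q ^ (h₁ - l₁ + (n : ℝ)) ≠ 1 ∧ q ^ (h₂ - l₁ + (n : ℝ)) * t₂ / t₁ ≠ 1) :
    confEq12 q h₁ h₂ l₁ α₁ lam t₁ t₂ (fun x =>
      x ^ lam * ∑ n ∈ Finset.range (N + 1),
        q ^ n * qPoch q (q ^ (lam + α₁)) n /
            (qPoch q (q ^ (h₁ - l₁ + 1)) n * qPoch q (q ^ (h₂ - l₁ + 1) * t₂ / t₁) n *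
              qPoch q q n) *
          qPoch q (x / (q ^ (l₁ - 1/2) * t₁)) n) := by

  have hq0 : q ≠ 0 := hq.ne'
  intro x hx
  have hTp : q ^ (l₁ - 1/2) ≠ 0 := (Real.rpow_pos_of_pos hq _).ne'
  set T := q ^ (l₁ - 1/2) * t₁ with hT
  have hT0 : T ≠ 0 := mul_ne_zero hTp ht₁
  set A := q ^ (lam + α₁) with hA
  set B := q ^ (h₁ - l₁ + 1) with hB
  set C := q ^ (h₂ - l₁ + 1) * t₂ / t₁ with hC
  set L := q ^ lam with hL
  have hL0 : L ≠ 0 := (Real.rpow_pos_of_pos hq _).ne'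
  set c : ℕ → ℝ := fun n => q ^ n * qPoch q A n / (qPoch q B n * qPoch q C n * qPoch q q n) with hcdef
  have hAN : A * q ^ N = 1 := by
    rw [hA, hNlam, Real.rpow_neg hq.le, Real.rpow_natCast]
    exact inv_mul_cancel₀ (pow_ne_zero _ hq0)
  have hc : ∀ n < N, c (n+1) * ((1 - B * q ^ n) * (1 - C * q ^ n) * (1 - q * q ^ n))
      = q * (1 - A * q ^ n) * c n := by
    intro n hn
    obtain ⟨hb, hc'⟩ := hden (n+1) (by omega) (by omega)
    have e1 : q ^ (h₁ - l₁ + ((n+1 : ℕ) : ℝ)) = B * q ^ n := by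
      rw [hB, ← Real.rpow_natCast, ← Real.rpow_add hq]; congr 1; push_cast; ring
    have e2 : q ^ (h₂ - l₁ + ((n+1 : ℕ) : ℝ)) * t₂ / t₁ = C * q ^ n := by
      have : q ^ (h₂ - l₁ + ((n+1 : ℕ) : ℝ)) = q ^ (h₂ - l₁ + 1) * q ^ n := by
        rw [← Real.rpow_natCast q n, ← Real.rpow_add hq]; congr 1; push_cast; ring
      rw [this, hC]; ring
    rw [e1] at hb
    rw [e2] at hc'
    have hb' : 1 - B * q ^ n ≠ 0 := sub_ne_zero.mpr (Ne.symm hb)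
    have hc'' : 1 - C * q ^ n ≠ 0 := sub_ne_zero.mpr (Ne.symm hc')
    have hqq : 1 - q * q ^ n ≠ 0 := by
      rw [← pow_succ', sub_ne_zero]
      intro h
      exact hq1 ((pow_eq_one_iff_of_nonneg hq.le (Nat.succ_ne_zero n)).1 h.symm)
    simp only [hcdef, qPoch_succ, pow_succ]
    rw [div_mul_eq_mul_div, show qPoch q B n * (1 - B * q ^ n) * (qPoch q C n * (1 - C * q ^ n)) *
      (qPoch q q n * (1 - q * q ^ n)) = (qPoch q B n * qPoch q C n * qPoch q q n) *
      ((1 - B * q ^ n) * (1 - C * q ^ n) * (1 - q * q ^ n)) by ring,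
      mul_div_mul_right _ _ (mul_ne_zero (mul_ne_zero hb' hc'') hqq)]
    ring
  have key := core_sum q A B C (x / T) hq0 c N hc N le_rfl
  rw [hAN] at key
  simp only [sub_self, zero_div, zero_mul] at key
  have r (a b : ℝ) : q ^ (a + b) = q ^ a * q ^ b := Real.rpow_add hq a b
  -- coefficients
  have k1 : q ^ (h₁ + 1/2) * t₁ = B * T := by
    rw [hB, hT, ← mul_assoc, ← r]; congr 2; ring
  have k2 : q ^ (h₂ + 1/2) * t₂ = C * T := by
    have : q ^ (h₂ + 1/2) = q ^ (h₂ - l₁ + 1) * q ^ (l₁ - 1/2) := by rw [← r]; congr 1; ring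
    rw [this, hC, hT]; field_simp
  have k3 : q ^ (h₁ + h₂ - l₁ - 2 * lam + 1/2) * t₂ * (L * L) = B * C * T / q := by
    have : q ^ (h₁ + h₂ - l₁ - 2 * lam + 1/2) * (L * L) * q
        = q ^ (h₁ - l₁ + 1) * q ^ (h₂ - l₁ + 1) * q ^ (l₁ - 1/2) := by
      rw [hL]; nth_rw 4 [← Real.rpow_one q]; simp only [← r]; congr 1; ring
    rw [eq_div_iff hq0, hB, hC, hT]
    generalize q ^ (h₁ + h₂ - l₁ - 2 * lam + 1/2) = u at *
    generalize q ^ (l₁ - 1/2) = v at *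
    generalize q ^ (h₁ - l₁ + 1) = w at *
    generalize q ^ (h₂ - l₁ + 1) = z at *
    have e : w * (z * t₂ / t₁) * (v * t₁) = w * z * v * t₂ := by field_simp
    rw [e]
    linear_combination t₂ * this
  have k4 : q ^ α₁ * L = A := by rw [hA, hL, ← r, add_comm]
  have k5 : q ^ (h₁ + h₂ - lam + 1/2) * (q ^ (-h₂) * t₁ + q ^ (-h₁) * t₂ + q ^ (-l₁) * t₂) * L
      = (B + C + B * C / q) * T := by
    have a1 : q ^ (h₁ + h₂ - lam + 1/2) * q ^ (-h₂) * L = q ^ (h₁ + 1/2) := by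
      rw [hL]; simp only [← r]; congr 1; ring
    have a2 : q ^ (h₁ + h₂ - lam + 1/2) * q ^ (-h₁) * L = q ^ (h₂ + 1/2) := by
      rw [hL]; simp only [← r]; congr 1; ring
    have a3 : q ^ (h₁ + h₂ - lam + 1/2) * q ^ (-l₁) * L
        = q ^ (h₁ + h₂ - l₁ - 2 * lam + 1/2) * (L * L) := by
      rw [hL]; simp only [← r]; congr 1; ring
    linear_combination t₁ * a1 + t₂ * a2 + t₂ * a3 + k1 + k2 + k3
  have k6 : q ^ (h₁ + h₂ - lam) * (q + 1) * t₁ * t₂ * L = B * C * (1 + 1 / q) * T ^ 2 := by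
    have a1 : q ^ (h₁ + h₂ - lam) * L * q = q ^ (h₁ + 1/2) * q ^ (h₂ + 1/2) := by
      rw [hL]; nth_rw 3 [← Real.rpow_one q]; simp only [← r]; congr 1; ring
    have a2 : q ^ (h₁ + h₂ - lam) * L * q * t₁ * t₂ = B * T * (C * T) := by
      rw [← k1, ← k2, a1]; ring
    clear_value T B C
    field_simp
    linear_combination a2
  have hy1 : q * x / T = q * (x / T) := by ring
  have hy2 : x / q / T = x / T / q := by ring
  have p1 : (q * x) ^ lam = L * x ^ lam := Real.mul_rpow hq.le hx.le
  have p2 : (x / q) ^ lam = x ^ lam / L := Real.div_rpow hx.le hq.le _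
  have hxT : x = T * (x / T) := by field_simp
  simp only [hy1, hy2, p1, p2]
  rw [k1, k2]
  change _ * (T - x) * (L * x ^ lam * ∑ n ∈ Finset.range (N + 1), c n * qPoch q (q * (x / T)) n)
    + _ * (x ^ lam / L * ∑ n ∈ Finset.range (N + 1), c n * qPoch q (x / T / q) n)
    - _ * (x ^ lam * ∑ n ∈ Finset.range (N + 1), c n * qPoch q (x / T) n) = 0
  generalize hX : x ^ lam = X
  generalize hy : x / T = y at *
  have key2 : B * C / q * (1 - y) * (∑ n ∈ Finset.range (N + 1), c n * qPoch q (q * y) n)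
      + (y - B) * (y - C) * (∑ n ∈ Finset.range (N + 1), c n * qPoch q (y / q) n)
      - (A * y ^ 2 - (B + C + B * C / q) * y + B * C * (1 + 1 / q)) *
        (∑ n ∈ Finset.range (N + 1), c n * qPoch q y n) = 0 := by
    rw [← key]
    simp only [Finset.mul_sum, ← Finset.sum_add_distrib, ← Finset.sum_sub_distrib]
    exact Finset.sum_congr rfl fun n _ => by ring
  generalize (∑ n ∈ Finset.range (N + 1), c n * qPoch q (q * y) n) = S1 at *
  generalize (∑ n ∈ Finset.range (N + 1), c n * qPoch q (y / q) n) = S2 at *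
  generalize (∑ n ∈ Finset.range (N + 1), c n * qPoch q y n) = S3 at *
  apply mul_right_cancel₀ hL0
  have hS2 : X / L * S2 * L = X * S2 := by field_simp
  have hxT' : x - T * y = 0 := sub_eq_zero.mpr hxT
  obtain rfl : x = T * y := hxT
  linear_combination (T - T * y) * X * S1 * k3 + (T * y - B * T) * (T * y - C * T) * hS2
    - (T * y) ^ 2 * X * S3 * k4 + (T * y) * X * S3 * k5 - X * S3 * k6 + T ^ 2 * X * key2
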